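/- arXiv:2008.13513 — 7 statements merged into one kernel-verified Lean document; each statement's English description precedes it below -/
import Mathlib

section
/- Suppose Λ > 0, a ≠ 0, and e, M are real numbers such that the quartic Δ_r(x) = (x²+a²)(1−(Λ/3)x²) − 2Mx + e² has four distinct real roots r_n < 0 < r_- < r_+ < r_c (subextremal Kerr–Newman–de Sitter). Set α = r_+/r_-. Then Λe² < E(α), E(α) < 1/4, and 0 < Λa² < l(α, Λe²). -/
/-- The function `l(α, γ)` bounding `Λ a²` for subextremal KNdS spacetimes. -/
noncomputable def KNdS.l (α γ : ℝ) : ℝ :=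
  (3 / (2 * α ^ 2 * (1 + 2 * α))) *
    ((1 + 4 * α + 12 * α ^ 2 + 16 * α ^ 3 + 9 * α ^ 4) -
      (1 + 2 * α + 3 * α ^ 2) *
        Real.sqrt ((1 + α) ^ 2 * (1 + 2 * α + 9 * α ^ 2) + (4 * γ / 3) * α ^ 2 * (1 + 2 * α)))

/-- The function `E(α)` bounding `Λ e²` for subextremal KNdS spacetimes. -/
noncomputable def KNdS.E (α : ℝ) : ℝ :=
  3 * α ^ 2 * (1 + 2 * α) / (1 + 2 * α + 3 * α ^ 2) ^ 2

theorem subextremal_KNdS_parameter_bounds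
    (Λ a e M rn rm rp rc : ℝ)
    (hΛ : 0 < Λ) (ha : a ≠ 0)
    (hrn : rn < 0) (h0 : 0 < rm) (hmp : rm < rp) (hpc : rp < rc)
    (hroots : ∀ x : ℝ,
      (x ^ 2 + a ^ 2) * (1 - (Λ / 3) * x ^ 2) - 2 * M * x + e ^ 2 =
        -(Λ / 3) * (x - rn) * (x - rm) * (x - rp) * (x - rc))
    (α : ℝ) (hα : α = rp / rm) :
    Λ * e ^ 2 < KNdS.E α ∧ KNdS.E α < 1 / 4 ∧
      0 < Λ * a ^ 2 ∧ Λ * a ^ 2 < KNdS.l α (Λ * e ^ 2) := by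
  have v0 := hroots 0
  have v1 := hroots 1
  have v2 := hroots (-1)
  have v3 := hroots 2
  have v4 := hroots (-2)
  have hα1 : 1 < α := by rw [hα, lt_div_iff₀ h0]; linarith
  have hα0 : 0 < α := by linarith
  have hrp : rp = α * rm := by rw [hα]; field_simp
  obtain ⟨L, hL⟩ : ∃ L, L = Λ / 3 := ⟨_, rfl⟩
  have hΛL : Λ = 3 * L := by linarith
  have hLp : 0 < L := by linarith
  rw [← hL] at v0 v1 v2 v3 v4
  have hsumL : L * (rn + rm + rp + rc) = 0 := by linarith
  have hsum : rn = -(rm + rp + rc) := by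
    rcases mul_eq_zero.mp hsumL with h | h <;> linarith
  obtain ⟨y, hy⟩ : ∃ y, rc = y * rm := ⟨rc / rm, by field_simp⟩
  have hyα : α < y := by
    have : α * rm < y * rm := by linarith
    exact lt_of_mul_lt_mul_right this h0.le
  subst hsum hrp hy
  obtain ⟨u, hu⟩ : ∃ u, u = L * rm ^ 2 := ⟨_, rfl⟩
  have hup : 0 < u := by rw [hu]; positivity
  obtain ⟨A, hA⟩ : ∃ A, A = L * a ^ 2 := ⟨_, rfl⟩
  obtain ⟨G, hG⟩ : ∃ G, G = L * e ^ 2 := ⟨_, rfl⟩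
  have hAp : 0 < A := by rw [hA]; positivity
  have hGp : 0 ≤ G := by rw [hG]; positivity
  obtain ⟨q, hq⟩ : ∃ q, q = y * (1 + α + y) := ⟨_, rfl⟩
  have hqq : α * (1 + 2 * α) < q := by 
    have : 0 < (y - α) * (1 + 2 * α + y) := mul_pos (by linarith) (by linarith)
    rw [hq]; linear_combination this
  have e1 : 1 - A = u * (1 + α + α ^ 2 + q) := by
    rw [hA, hu, hq]; linear_combination (v1 + v2) / 2 - v0
  have e2 : A + G = α * u ^ 2 * q := by
    rw [hA, hG, hu, hq]; linear_combination L * v0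
  have hqp : 0 < q := lt_trans (by positivity) hqq
  have hA1 : 0 < 1 - A := by rw [e1]; positivity
  have hD : 0 < 1 + 2 * α + 3 * α ^ 2 := by positivity
  have hw : 0 < α ^ 2 * (1 + 2 * α) := by positivity
  have key : (1 + 2 * α + 3 * α ^ 2) ^ 2 * (A + G) < α ^ 2 * (1 + 2 * α) * (1 - A) ^ 2 := by
    rw [e1, e2]
    have h1 : 1 + α + α ^ 2 < α * (1 + 2 * α) := by
      have : 0 < (α - 1) * (α + 1) := mul_pos (by linarith) (by linarith)
      linear_combination this
    have h2 : (1 + α + α ^ 2) * (1 + α + α ^ 2) < q * (α * (1 + 2 * α)) :=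
      mul_lt_mul'' (h1.trans hqq) h1 (by positivity) (by positivity)
    have h3 := mul_pos (mul_pos hα0 (pow_pos hup 2)) (mul_pos (sub_pos.2 hqq) (sub_pos.2 h2))
    linear_combination h3
  have hΛe : Λ * e ^ 2 = 3 * G := by rw [hG, hΛL]; ring
  have hΛa : Λ * a ^ 2 = 3 * A := by rw [hA, hΛL]; ring
  rw [hΛe, hΛa]
  clear hroots v0 v1 v2 v3 v4 hsumL e1 e2 hA hG hu hq hΛe hΛa hΛL hL
  refine ⟨?_, ?_, by linarith, ?_⟩
  · unfold KNdS.E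
    rw [lt_div_iff₀ (by positivity)]
    have h1 : (1 - A) ^ 2 < 1 := pow_lt_one₀ hA1.le (by linarith) two_ne_zero
    have h2 := mul_lt_mul_of_pos_left h1 hw
    have h3 : 0 < (1 + 2 * α + 3 * α ^ 2) ^ 2 * A := by positivity
    linarith
  · unfold KNdS.E
    rw [div_lt_iff₀ (by positivity)]
    have h1 : 0 < (α - 1) ^ 2 * (3 * α + 1) ^ 2 := by
      have : 0 < α - 1 := by linarith
      positivity
    linarith
  · unfold KNdS.l
    have hS : (1 + 2 * α + 3 * α ^ 2) * Real.sqrt ((1 + α) ^ 2 * (1 + 2 * α + 9 * α ^ 2)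
        + (4 * (3 * G) / 3) * α ^ 2 * (1 + 2 * α)) <
        (1 + 4 * α + 12 * α ^ 2 + 16 * α ^ 3 + 9 * α ^ 4) - 2 * (α ^ 2 * (1 + 2 * α)) * A := by
      have hpos : 0 < (1 + 4 * α + 12 * α ^ 2 + 16 * α ^ 3 + 9 * α ^ 4)
          - 2 * (α ^ 2 * (1 + 2 * α)) * A := by
        have h1 := mul_pos hw hA1
        have h2 := pow_pos hD 2
        linarith
      refine lt_of_pow_lt_pow_left₀ 2 hpos.le ?_
      rw [mul_pow, Real.sq_sqrt (by positivity)]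
      have h3 := mul_pos hw (sub_pos.2 key)
      linear_combination 4 * h3
    rw [div_mul_eq_mul_div, lt_div_iff₀ (by positivity)]
    linarith
end

section
/- Suppose Λ > 0, a ≠ 0, and e, M are real numbers such that Δ_r(x) = (x²+a²)(1−(Λ/3)x²) − 2Mx + e² has four distinct real roots r_n < 0 < r_- < r_+ < r_c. Then, with b = r_-² + r_+² + r_- r_+, the quantity (1 − Λa²/3)² − 4Λ(a²+e²)b/(3 r_- r_+) is nonnegative and Λ = [ (3 − Λa²) − 3·√( (1 − Λa²/3)² − 4Λ(a²+e²)b/(3 r_- r_+) ) ] / (2b); that is, Λ is the smaller of the two roots of the quadratic equation (b/3)X² − (1 − Λa²/3)X + Λ(a²+e²)/(r_- r_+) = 0. -/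
theorem subextremal_KNdS_Lambda_formula
    (Λ a e M rn rm rp rc : ℝ)
    (hΛ : 0 < Λ) (ha : a ≠ 0)
    (hrn : rn < 0) (h0 : 0 < rm) (hmp : rm < rp) (hpc : rp < rc)
    (hroots : ∀ x : ℝ,
      (x ^ 2 + a ^ 2) * (1 - (Λ / 3) * x ^ 2) - 2 * M * x + e ^ 2 =
        -(Λ / 3) * (x - rn) * (x - rm) * (x - rp) * (x - rc))
    (b : ℝ) (hb : b = rm ^ 2 + rp ^ 2 + rm * rp) :
    0 ≤ (1 - Λ * a ^ 2 / 3) ^ 2 - 4 * Λ * (a ^ 2 + e ^ 2) * b / (3 * rm * rp) ∧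
      Λ = ((3 - Λ * a ^ 2) -
            3 * Real.sqrt ((1 - Λ * a ^ 2 / 3) ^ 2 -
              4 * Λ * (a ^ 2 + e ^ 2) * b / (3 * rm * rp))) / (2 * b) := by
  have H0 := hroots 0
  have H1 := hroots 1
  have H2 := hroots (-1)
  have H3 := hroots 2
  have H4 := hroots (-2)
  have hs : Λ * (rn + rm + rp + rc) = 0 := by linarith
  have hs' : rn = -(rm + rp + rc) := by
    rcases mul_eq_zero.mp hs with h | h <;> linarith
  subst hs'
  have hrp : 0 < rp := h0.trans hmp
  obtain ⟨K, hK⟩ : ∃ K, K = rc * (rm + rp + rc) := ⟨_, rfl⟩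
  have hKb : b < K := by
    rw [hb, hK]
    nlinarith [mul_pos h0 hrp, mul_pos (sub_pos.mpr hpc) hrp, mul_pos (sub_pos.mpr hpc) h0,
      mul_pos (sub_pos.mpr hmp) hrp, mul_pos (sub_pos.mpr hmp) h0, sq_nonneg (rc - rp)]
  have hbpos : 0 < b := by rw [hb]; positivity
  have hc : a ^ 2 + e ^ 2 = Λ / 3 * K * (rm * rp) := by rw [hK]; linarith
  have hq : 1 - Λ * a ^ 2 / 3 = Λ / 3 * (b + K) := by rw [hK, hb]; linarith
  have hD : (1 - Λ * a ^ 2 / 3) ^ 2 - 4 * Λ * (a ^ 2 + e ^ 2) * b / (3 * rm * rp)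
      = (Λ / 3 * (K - b)) ^ 2 := by
    rw [hq, hc]
    field_simp
    ring
  rw [hD]
  refine ⟨sq_nonneg _, ?_⟩
  rw [Real.sqrt_sq (mul_nonneg (by linarith) (by linarith)), eq_div_iff (by positivity)]
  linarith
end

section
/- For every γ with 0 < γ < 1/4, define Γ(γ) = [ 1 − 2γ + √(1−4γ) + √2·√( 1 − γ − 4γ² + (1+γ)·√(1−4γ) ) ] / (6γ). Then Γ(γ) > 1 and 3·Γ(γ)²·(1+2Γ(γ)) / (1 + 2Γ(γ) + 3Γ(γ)²)² = γ; that is, Γ(γ) is a solution greater than one of the equation E(α) = γ. -/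
/-- The inverse `Γ(γ)` of the function `E(α) = 3α²(1+2α)/(1+2α+3α²)²`. -/
noncomputable def KNdS.Gamma (γ : ℝ) : ℝ :=
  (1 - 2 * γ + Real.sqrt (1 - 4 * γ) +
    Real.sqrt 2 *
      Real.sqrt (1 - γ - 4 * γ ^ 2 + (1 + γ) * Real.sqrt (1 - 4 * γ))) / (6 * γ)

theorem KNdS_Gamma_inverts_E (γ : ℝ) (hγ0 : 0 < γ) (hγ1 : γ < 1 / 4) :
    KNdS.Gamma γ > 1 ∧
      3 * (KNdS.Gamma γ) ^ 2 * (1 + 2 * KNdS.Gamma γ) /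
        (1 + 2 * KNdS.Gamma γ + 3 * (KNdS.Gamma γ) ^ 2) ^ 2 = γ := by
  obtain ⟨s, hs⟩ : ∃ s, s = Real.sqrt (1 - 4 * γ) := ⟨_, rfl⟩
  have hs0 : 0 ≤ s := hs ▸ Real.sqrt_nonneg _
  have hs2 : s ^ 2 = 1 - 4 * γ := by
    rw [hs]; exact Real.sq_sqrt (by linarith)
  have hR : 0 ≤ 1 - γ - 4 * γ ^ 2 + (1 + γ) * s := by
    have : 0 ≤ (1 + γ) * s := by positivity
    nlinarith
  obtain ⟨t, ht⟩ : ∃ t, t = Real.sqrt 2 * Real.sqrt (1 - γ - 4 * γ ^ 2 + (1 + γ) * s) :=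
    ⟨_, rfl⟩
  have ht0 : 0 ≤ t := by rw [ht]; positivity
  have ht2 : t ^ 2 = 2 * (1 - γ - 4 * γ ^ 2 + (1 + γ) * s) := by
    rw [ht, mul_pow, Real.sq_sqrt hR, Real.sq_sqrt (by norm_num)]
  obtain ⟨p, hp⟩ : ∃ p, p = 1 - 2 * γ + s := ⟨_, rfl⟩
  have hp0 : 2 * γ < p := by linarith
  have hp2 : p ^ 2 = 2 * (1 - 2 * γ) * p - 4 * γ ^ 2 := by
    subst hp; linear_combination hs2
  have htp : t ^ 2 = p ^ 2 + 6 * γ * p := by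
    subst hp; linear_combination ht2 - hs2
  have ht4 : 4 * γ < t := by
    apply lt_of_pow_lt_pow_left₀ 2 ht0
    nlinarith
  obtain ⟨a, ha⟩ : ∃ a, a = KNdS.Gamma γ := ⟨_, rfl⟩
  have ha' : a = (p + t) / (6 * γ) := by
    rw [ha, KNdS.Gamma, ← hs, ← ht, ← hp]
  have hat : 6 * γ * a = p + t := by rw [ha']; field_simp
  rw [← ha]
  have ha1 : 1 < a := by
    rw [ha', lt_div_iff₀ (by positivity)]; linarith
  refine ⟨ha1, ?_⟩
  have hγ : γ ≠ 0 := hγ0.ne'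
  have key : 2 * γ * (3 * a ^ 2) = p * (1 + 2 * a) := by
    have h : 6 * γ * (2 * γ * (3 * a ^ 2)) = 6 * γ * (p * (1 + 2 * a)) := by
      have ht' : t = 6 * γ * a - p := by linarith
      rw [ht'] at htp
      linear_combination htp
    exact mul_left_cancel₀ (by positivity) h
  rw [div_eq_iff (by positivity)]
  have hu : 3 * a ^ 2 = p * (1 + 2 * a) / (2 * γ) := by
    rw [eq_div_iff (by positivity)]; linarith
  rw [hu]
  field_simp
  linear_combination -hp2
end

section
/- lim_{α → +∞} α · l(α, 0) = 2/3; equivalently, lim_{α → +∞} l(α,0) / (2/(3α)) = 1. -/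
theorem KNdS_l_asymptotics :
    Filter.Tendsto (fun α : ℝ => α * KNdS.l α 0) Filter.atTop (nhds (2 / 3)) := by
  have hc : Filter.Tendsto (fun x : ℝ => 6 * (x + 2) / ((x ^ 4 + 4 * x ^ 3 + 12 * x ^ 2 + 16 * x + 9) +
      (x ^ 3 + 3 * x ^ 2 + 5 * x + 3) * Real.sqrt (x ^ 2 + 2 * x + 9))) (nhds 0) (nhds (2 / 3)) := by
    have h9 : Real.sqrt 9 = 3 := by
      rw [show (9 : ℝ) = 3 ^ 2 by norm_num]
      exact Real.sqrt_sq (by norm_num)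
    have hcont : ContinuousAt (fun x : ℝ => 6 * (x + 2) / ((x ^ 4 + 4 * x ^ 3 + 12 * x ^ 2 + 16 * x + 9) +
      (x ^ 3 + 3 * x ^ 2 + 5 * x + 3) * Real.sqrt (x ^ 2 + 2 * x + 9))) 0 := by
      apply ContinuousAt.div
      · fun_prop
      · fun_prop
      · norm_num [h9]
    have h := hcont.tendsto
    norm_num [h9] at h
    exact h
  refine (hc.comp tendsto_inv_atTop_zero).congr' ?_
  filter_upwards [Filter.eventually_gt_atTop (0 : ℝ)] with α hα
  have hs : Real.sqrt ((1 + α) ^ 2 * (1 + 2 * α + 9 * α ^ 2) + (4 * 0 / 3) * α ^ 2 * (1 + 2 * α))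
      = (1 + α) * Real.sqrt (1 + 2 * α + 9 * α ^ 2) := by
    rw [show (1 + α) ^ 2 * (1 + 2 * α + 9 * α ^ 2) + (4 * 0 / 3) * α ^ 2 * (1 + 2 * α)
      = (1 + α) ^ 2 * (1 + 2 * α + 9 * α ^ 2) by ring, Real.sqrt_mul (by positivity),
      Real.sqrt_sq (by positivity)]
  have hs2 : Real.sqrt (α⁻¹ ^ 2 + 2 * α⁻¹ + 9) = Real.sqrt (1 + 2 * α + 9 * α ^ 2) / α := by
    rw [show α⁻¹ ^ 2 + 2 * α⁻¹ + 9 = (1 + 2 * α + 9 * α ^ 2) / α ^ 2 by field_simp,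
      Real.sqrt_div (by positivity), Real.sqrt_sq hα.le]
  have hq : Real.sqrt (1 + 2 * α + 9 * α ^ 2) ^ 2 = 1 + 2 * α + 9 * α ^ 2 :=
    Real.sq_sqrt (by positivity)
  have hn : 0 ≤ Real.sqrt (1 + 2 * α + 9 * α ^ 2) := Real.sqrt_nonneg _
  simp only [Function.comp, KNdS.l, hs, hs2]
  generalize Real.sqrt (1 + 2 * α + 9 * α ^ 2) = S at *
  have hD : 0 < (1 + 4 * α + 12 * α ^ 2 + 16 * α ^ 3 + 9 * α ^ 4) +
      (1 + 2 * α + 3 * α ^ 2) * ((1 + α) * S) := by positivity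
  have e1 : 6 * (α⁻¹ + 2) / ((α⁻¹ ^ 4 + 4 * α⁻¹ ^ 3 + 12 * α⁻¹ ^ 2 + 16 * α⁻¹ + 9) +
      (α⁻¹ ^ 3 + 3 * α⁻¹ ^ 2 + 5 * α⁻¹ + 3) * (S / α)) = 6 * α ^ 3 * (1 + 2 * α) /
      ((1 + 4 * α + 12 * α ^ 2 + 16 * α ^ 3 + 9 * α ^ 4) +
      (1 + 2 * α + 3 * α ^ 2) * ((1 + α) * S)) := by
    rw [div_eq_div_iff (by positivity) hD.ne']
    field_simp
    ring
  have e2 : (1 + 4 * α + 12 * α ^ 2 + 16 * α ^ 3 + 9 * α ^ 4) -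
      (1 + 2 * α + 3 * α ^ 2) * ((1 + α) * S) = 4 * α ^ 4 * (1 + 2 * α) ^ 2 /
      ((1 + 4 * α + 12 * α ^ 2 + 16 * α ^ 3 + 9 * α ^ 4) +
      (1 + 2 * α + 3 * α ^ 2) * ((1 + α) * S)) := by
    rw [eq_div_iff hD.ne']
    linear_combination (-((1 + 2 * α + 3 * α ^ 2) * (1 + α)) ^ 2) * hq
  rw [e1, e2]
  generalize (1 + 4 * α + 12 * α ^ 2 + 16 * α ^ 3 + 9 * α ^ 4) +
      (1 + 2 * α + 3 * α ^ 2) * ((1 + α) * S) = D at *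
  field_simp
  ring
end

section
/- For every α > 1, one has 1 + l(α,0)/3 < 1/sin²( arctan(√α) − arctan(1/√α) ); that is, the quotient ρ̂(α) = ( 1/sin²(arctan(√α) − arctan(1/√α)) − 1 ) / ( l(α,0)/3 ) is strictly greater than one for all α > 1. -/
theorem KNdS_sin_aux (α : ℝ) (hα : 1 < α) :
    (Real.sin (Real.arctan (Real.sqrt α) - Real.arctan (1 / Real.sqrt α))) = (α - 1) / (α + 1) := by
  have h0 : 0 < Real.sqrt α := Real.sqrt_pos.mpr (by linarith)
  have h1 : Real.sqrt α ^ 2 = α := Real.sq_sqrt (by linarith)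
  have h2 : Real.arctan (1 / Real.sqrt α) = Real.pi / 2 - Real.arctan (Real.sqrt α) := by
    rw [one_div, Real.arctan_inv_of_pos h0]
  have h3 : Real.arctan (Real.sqrt α) - Real.arctan (1 / Real.sqrt α)
      = 2 * Real.arctan (Real.sqrt α) - Real.pi / 2 := by rw [h2]; ring
  rw [h3, Real.sin_sub_pi_div_two, Real.cos_two_mul, Real.cos_sq_arctan, h1]
  have : (1 + α) ≠ 0 := by linarith
  have : (α + 1) ≠ 0 := by linarith
  field_simp
  ring

theorem KNdS_rho_hat_gt_one (α : ℝ) (hα : 1 < α) :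
    1 + KNdS.l α 0 / 3 <
      1 / (Real.sin (Real.arctan (Real.sqrt α) - Real.arctan (1 / Real.sqrt α))) ^ 2 := by
  rw [KNdS_sin_aux α hα]
  have ha : 0 < α := by linarith
  have hd : 0 < α - 1 := by linarith
  unfold KNdS.l
  set R := Real.sqrt ((1 + α) ^ 2 * (1 + 2 * α + 9 * α ^ 2) + (4 * 0 / 3) * α ^ 2 * (1 + 2 * α))
    with hR
  have hR0 : 0 ≤ R := Real.sqrt_nonneg _
  have hR2 : R ^ 2 = (1 + α) ^ 2 * (1 + 2 * α + 9 * α ^ 2) := by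
    rw [hR, Real.sq_sqrt (by positivity)]; ring
  clear_value R
  have key : (1 + 4 * α + 12 * α ^ 2 + 16 * α ^ 3 + 9 * α ^ 4) * (α - 1) ^ 2
      - 8 * α ^ 3 * (1 + 2 * α) < (1 + 2 * α + 3 * α ^ 2) * R * (α - 1) ^ 2 := by
    by_contra hc
    push Not at hc
    have hY : 0 ≤ (1 + 2 * α + 3 * α ^ 2) * R * (α - 1) ^ 2 := by positivity
    have hsq := pow_le_pow_left₀ hY hc 2
    have hX := hY.trans hc
    have e1 : ((1 + 2 * α + 3 * α ^ 2) * R * (α - 1) ^ 2) ^ 2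
        = (1 + 2 * α + 3 * α ^ 2) ^ 2 * ((1 + α) ^ 2 * (1 + 2 * α + 9 * α ^ 2)) * (α - 1) ^ 4 := by
      rw [← hR2]; ring
    rw [e1] at hsq
    have hG : 0 < 2 * (1 + 4 * α + 12 * α ^ 2 + 16 * α ^ 3 + 9 * α ^ 4)
        - α * (1 + 2 * α) * (α - 1) ^ 2 := by
      have : 2 * (1 + 4 * α + 12 * α ^ 2 + 16 * α ^ 3 + 9 * α ^ 4)
        - α * (1 + 2 * α) * (α - 1) ^ 2
        = 2 + 7 * α + 24 * α ^ 2 + 35 * α ^ 3 + 16 * α ^ 4 := by ring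
      rw [this]; positivity
    have hc1 : 0 < 4 * α ^ 3 * (1 + 2 * α) := by positivity
    have hd2 : 0 < (α - 1) ^ 2 := by positivity
    have h1 := mul_pos hc1 (mul_pos hd2 hG)
    have h2 := mul_nonneg hc1.le hX
    linarith
  have e2 : 1 / ((α - 1) / (α + 1)) ^ 2 = 1 + 4 * α / (α - 1) ^ 2 := by
    field_simp; ring
  rw [e2]
  have e3 : (3 / (2 * α ^ 2 * (1 + 2 * α))) *
    ((1 + 4 * α + 12 * α ^ 2 + 16 * α ^ 3 + 9 * α ^ 4) -
      (1 + 2 * α + 3 * α ^ 2) * R) / 3 = ((1 + 4 * α + 12 * α ^ 2 + 16 * α ^ 3 + 9 * α ^ 4) -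
      (1 + 2 * α + 3 * α ^ 2) * R) / (2 * α ^ 2 * (1 + 2 * α)) := by
    field_simp
  rw [e3]
  have : ((1 + 4 * α + 12 * α ^ 2 + 16 * α ^ 3 + 9 * α ^ 4) -
      (1 + 2 * α + 3 * α ^ 2) * R) / (2 * α ^ 2 * (1 + 2 * α)) < 4 * α / (α - 1) ^ 2 := by
    rw [div_lt_div_iff₀ (by positivity) (by positivity)]
    linarith
  linarith
end

section
/- Let k ≥ 0. Then the function θ⋆ ↦ ∫₀^{θ⋆} dθ' / √( sin²θ⋆·(1 + k·cos²θ') − sin²θ' ) is strictly increasing on (0, π/2): if 0 < θ⋆ < θ̃⋆ < π/2 then ∫₀^{θ⋆} dθ'/√(sin²θ⋆·(1+k·cos²θ') − sin²θ') < ∫₀^{θ̃⋆} dθ'/√(sin²θ̃⋆·(1+k·cos²θ') − sin²θ'). -/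
noncomputable def angG (k s x : ℝ) : ℝ :=
  Real.cos x / (Real.sqrt (1 - s ^ 2 * Real.sin x ^ 2) *
    Real.sqrt (Real.cos x ^ 2 + k * (1 - s ^ 2 * Real.sin x ^ 2)))

lemma angG_u_pos {s x : ℝ} (hs0 : 0 < s) (hs1 : s < 1) : 0 < 1 - s ^ 2 * Real.sin x ^ 2 := by
  have h1 := Real.sin_sq_le_one x
  have h2 : s ^ 2 < 1 := by nlinarith
  nlinarith [sq_nonneg s]

lemma angG_image {t : ℝ} (h0 : 0 < t) (h2 : t < Real.pi / 2) :
    (fun x => Real.arcsin (Real.sin t * Real.sin x)) '' Set.Ioo 0 (Real.pi / 2) =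
      Set.Ioo 0 t := by
  have hpi := Real.pi_pos
  have hs0 : 0 < Real.sin t := Real.sin_pos_of_pos_of_lt_pi h0 (by linarith)
  have hs1 : Real.sin t < 1 := by
    rw [← Real.sin_pi_div_two]
    exact Real.sin_lt_sin_of_lt_of_le_pi_div_two (by linarith) le_rfl h2
  ext y
  constructor
  · rintro ⟨x, ⟨hx0, hx1⟩, rfl⟩
    have hx : 0 < Real.sin x := Real.sin_pos_of_pos_of_lt_pi hx0 (by linarith)
    have hx' : Real.sin x < 1 := by
      rw [← Real.sin_pi_div_two]
      exact Real.sin_lt_sin_of_lt_of_le_pi_div_two (by linarith) le_rfl hx1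
    refine ⟨Real.arcsin_pos.2 (by positivity), ?_⟩
    rw [Real.arcsin_lt_iff_lt_sin' ⟨by linarith, by linarith⟩]
    nlinarith
  · rintro ⟨hy0, hy1⟩
    have hy : 0 < Real.sin y := Real.sin_pos_of_pos_of_lt_pi hy0 (by linarith)
    have hyt : Real.sin y < Real.sin t :=
      Real.sin_lt_sin_of_lt_of_le_pi_div_two (by linarith) h2.le hy1
    have hq : 0 < Real.sin y / Real.sin t := by positivity
    have hq1 : Real.sin y / Real.sin t < 1 := by rwa [div_lt_one hs0]
    refine ⟨Real.arcsin (Real.sin y / Real.sin t), ⟨Real.arcsin_pos.2 hq,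
      Real.arcsin_lt_pi_div_two.2 hq1⟩, ?_⟩
    simp only
    rw [Real.sin_arcsin (by linarith) hq1.le, mul_div_cancel₀ _ hs0.ne']
    exact Real.arcsin_sin (by linarith) (by linarith)

lemma angG_change (k : ℝ) {t : ℝ} (h0 : 0 < t) (h2 : t < Real.pi / 2) :
    (∫ θ' in (0:ℝ)..t,
        1 / Real.sqrt (Real.sin t ^ 2 * (1 + k * Real.cos θ' ^ 2) - Real.sin θ' ^ 2)) =
      ∫ x in (0:ℝ)..(Real.pi / 2), angG k (Real.sin t) x := by
  have hpi := Real.pi_pos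
  have hs0 : 0 < Real.sin t := Real.sin_pos_of_pos_of_lt_pi h0 (by linarith)
  have hs1 : Real.sin t < 1 := by
    rw [← Real.sin_pi_div_two]
    exact Real.sin_lt_sin_of_lt_of_le_pi_div_two (by linarith) le_rfl h2
  have him := angG_image h0 h2
  rw [intervalIntegral.integral_of_le h0.le, intervalIntegral.integral_of_le (by positivity),
    MeasureTheory.integral_Ioc_eq_integral_Ioo, MeasureTheory.integral_Ioc_eq_integral_Ioo, ← him]
  have hb : ∀ x, -1 < Real.sin t * Real.sin x ∧ Real.sin t * Real.sin x < 1 := by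
    intro x
    have := angG_u_pos (x := x) hs0 hs1
    constructor <;> nlinarith
  rw [MeasureTheory.integral_image_eq_integral_abs_deriv_smul measurableSet_Ioo
    (f' := fun x => 1 / Real.sqrt (1 - (Real.sin t * Real.sin x) ^ 2) *
      (Real.sin t * Real.cos x))]
  · apply MeasureTheory.setIntegral_congr_fun measurableSet_Ioo
    intro x hx
    have hu := angG_u_pos (x := x) hs0 hs1
    have hc : 0 < Real.cos x := Real.cos_pos_of_mem_Ioo ⟨by linarith [hx.1], hx.2⟩
    simp only [smul_eq_mul, angG]
    rw [Real.sin_arcsin (hb x).1.le (hb x).2.le, Real.cos_arcsin, mul_pow,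
      Real.sq_sqrt hu.le, abs_of_nonneg (by positivity)]
    have e : Real.sin t ^ 2 * (1 + k * (1 - Real.sin t ^ 2 * Real.sin x ^ 2)) -
        Real.sin t ^ 2 * Real.sin x ^ 2 = Real.sin t ^ 2 *
        (Real.cos x ^ 2 + k * (1 - Real.sin t ^ 2 * Real.sin x ^ 2)) := by
      rw [Real.cos_sq' x]; ring
    rw [e, Real.sqrt_mul (sq_nonneg _), Real.sqrt_sq hs0.le]
    simp only [div_eq_mul_inv, mul_inv, one_mul]
    field_simp
  · intro x hx
    have h := (Real.hasDerivAt_arcsin (hb x).1.ne' (hb x).2.ne).comp x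
      ((Real.hasDerivAt_sin x).const_mul (Real.sin t))
    exact h.hasDerivWithinAt
  · intro x hx y hy hxy
    have h := Real.injOn_arcsin ⟨(hb x).1.le, (hb x).2.le⟩ ⟨(hb y).1.le, (hb y).2.le⟩ hxy
    have h' := mul_left_cancel₀ hs0.ne' h
    exact Real.injOn_sin ⟨by linarith [hx.1], hx.2.le⟩ ⟨by linarith [hy.1], hy.2.le⟩ h'

lemma angG_integrable {k : ℝ} (hk : 0 ≤ k) {s : ℝ} (hs0 : 0 < s) (hs1 : s < 1) :
    IntervalIntegrable (angG k s) MeasureTheory.volume 0 (Real.pi / 2) := by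
  have hm : Measurable (angG k s) := by unfold angG; fun_prop
  have hcst : IntervalIntegrable (fun _ : ℝ => 1 / Real.sqrt (1 - s ^ 2))
    MeasureTheory.volume 0 (Real.pi / 2) := intervalIntegrable_const
  refine hcst.mono_fun hm.aestronglyMeasurable (Filter.Eventually.of_forall fun x => ?_)
  have hu := angG_u_pos (x := x) hs0 hs1
  have h2 : 0 < 1 - s ^ 2 := by nlinarith
  beta_reduce
  rw [Real.norm_eq_abs, Real.norm_eq_abs, abs_of_nonneg (a := 1 / _) (by positivity), angG,
    abs_div, abs_of_nonneg (a := _ * _) (by positivity), mul_comm, ← div_div]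
  have hA : |Real.cos x| / Real.sqrt (Real.cos x ^ 2 + k * (1 - s ^ 2 * Real.sin x ^ 2)) ≤ 1 := by
    apply div_le_one_of_le₀ _ (Real.sqrt_nonneg _)
    apply Real.abs_le_sqrt
    have := mul_nonneg hk hu.le
    linarith
  have hB : Real.sqrt (1 - s ^ 2) ≤ Real.sqrt (1 - s ^ 2 * Real.sin x ^ 2) := by
    apply Real.sqrt_le_sqrt
    nlinarith [Real.sin_sq_le_one x, sq_nonneg s]
  have := Real.sqrt_pos.2 h2
  gcongr

lemma angG_lt {k : ℝ} (hk : 0 ≤ k) {s s' x : ℝ} (hs0 : 0 < s) (hss : s < s') (hs1 : s' < 1)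
    (hx : x ∈ Set.Ioo 0 (Real.pi / 2)) : angG k s x < angG k s' x := by
  have hpi := Real.pi_pos
  have hc : 0 < Real.cos x := Real.cos_pos_of_mem_Ioo ⟨by linarith [hx.1], hx.2⟩
  have hsx : 0 < Real.sin x := Real.sin_pos_of_pos_of_lt_pi hx.1 (by linarith [hx.2])
  have hu' := angG_u_pos (x := x) (hs0.trans hss) hs1
  have hlt : 1 - s' ^ 2 * Real.sin x ^ 2 < 1 - s ^ 2 * Real.sin x ^ 2 := by
    gcongr
  unfold angG
  have hp : 0 < Real.cos x ^ 2 + k * (1 - s' ^ 2 * Real.sin x ^ 2) := by positivity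
  have h1 : Real.sqrt (1 - s' ^ 2 * Real.sin x ^ 2) < Real.sqrt (1 - s ^ 2 * Real.sin x ^ 2) :=
    Real.sqrt_lt_sqrt hu'.le hlt
  have h2 : Real.sqrt (Real.cos x ^ 2 + k * (1 - s' ^ 2 * Real.sin x ^ 2)) ≤
      Real.sqrt (Real.cos x ^ 2 + k * (1 - s ^ 2 * Real.sin x ^ 2)) := by
    apply Real.sqrt_le_sqrt
    gcongr
  have h3 := Real.sqrt_pos.2 hp
  have h4 := Real.sqrt_pos.2 hu'
  apply div_lt_div_of_pos_left hc (by positivity)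
  exact mul_lt_mul h1 h2 h3 (Real.sqrt_nonneg _)

open intervalIntegral in
theorem angular_integral_strictMono (k : ℝ) (hk : 0 ≤ k)
    (θs θs' : ℝ) (h0 : 0 < θs) (h1 : θs < θs') (h2 : θs' < Real.pi / 2) :
    (∫ θ' in (0:ℝ)..θs,
        1 / Real.sqrt (Real.sin θs ^ 2 * (1 + k * Real.cos θ' ^ 2) - Real.sin θ' ^ 2)) <
      ∫ θ' in (0:ℝ)..θs',
        1 / Real.sqrt (Real.sin θs' ^ 2 * (1 + k * Real.cos θ' ^ 2) - Real.sin θ' ^ 2) := by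
  have hpi := Real.pi_pos
  rw [angG_change k h0 (h1.trans h2), angG_change k (h0.trans h1) h2]
  have hs0 : 0 < Real.sin θs := Real.sin_pos_of_pos_of_lt_pi h0 (by linarith)
  have hss : Real.sin θs < Real.sin θs' :=
    Real.sin_lt_sin_of_lt_of_le_pi_div_two (by linarith) h2.le h1
  have hs1 : Real.sin θs' < 1 := by
    rw [← Real.sin_pi_div_two]
    exact Real.sin_lt_sin_of_lt_of_le_pi_div_two (by linarith) le_rfl h2
  have i1 := angG_integrable hk hs0 (hss.trans hs1)
  have i2 := angG_integrable hk (hs0.trans hss) hs1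
  rw [← sub_pos, ← intervalIntegral.integral_sub i2 i1]
  exact intervalIntegral.intervalIntegral_pos_of_pos_on (i2.sub i1)
    (fun x hx => sub_pos.2 (angG_lt hk hs0 hss hs1 hx)) (by positivity)
end

section
/- Let k ≥ 0 and let 0 ≤ θ < θ⋆ < π/2. Then ∫_θ^{θ⋆} dθ' / √( sin²θ⋆·(1 + k·cos²θ') − sin²θ' ) ≥ arcsin( 1/√(1+k) ) − arcsin( sin θ / ( √(1+k)·sin θ⋆ ) ). -/
lemma hasDerivAt_arcsin_sin_div (m t : ℝ) (hm : 0 < m) (h0 : 0 ≤ Real.sin t) (h : Real.sin t < m) :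
    HasDerivAt (fun t => Real.arcsin (Real.sin t / m))
      (Real.cos t / Real.sqrt (m ^ 2 - Real.sin t ^ 2)) t := by
  have hlt : Real.sin t / m < 1 := (div_lt_one hm).2 h
  have hge : 0 ≤ Real.sin t / m := by positivity
  have h1 := (Real.hasDerivAt_arcsin (x := Real.sin t / m) (by linarith) hlt.ne).comp t
    ((Real.hasDerivAt_sin t).div_const m)
  refine h1.congr_deriv ?_
  have e : m ^ 2 - Real.sin t ^ 2 = m ^ 2 * (1 - (Real.sin t / m) ^ 2) := by
    field_simp
  have hp : 0 < 1 - (Real.sin t / m) ^ 2 := by nlinarith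
  rw [e, Real.sqrt_mul (sq_nonneg m), Real.sqrt_sq hm.le]
  have := Real.sqrt_pos.2 hp
  generalize Real.sqrt (1 - (Real.sin t / m) ^ 2) = r at *
  field_simp

open intervalIntegral in
theorem angular_integral_lower_bound (k : ℝ) (hk : 0 ≤ k)
    (θ θs : ℝ) (h0 : 0 ≤ θ) (h1 : θ < θs) (h2 : θs < Real.pi / 2) :
    (∫ θ' in θ..θs,
        1 / Real.sqrt (Real.sin θs ^ 2 * (1 + k * Real.cos θ' ^ 2) - Real.sin θ' ^ 2)) ≥
      Real.arcsin (1 / Real.sqrt (1 + k)) -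
        Real.arcsin (Real.sin θ / (Real.sqrt (1 + k) * Real.sin θs)) := by
  have hs : 0 < Real.sin θs := Real.sin_pos_of_pos_of_lt_pi (by linarith) (by linarith)
  have hc : 0 < Real.cos θs := Real.cos_pos_of_mem_Ioo ⟨by linarith, h2⟩
  have hr : 1 ≤ Real.sqrt (1 + k) := Real.one_le_sqrt.2 (by linarith)
  have hr2 : Real.sqrt (1 + k) ^ 2 = 1 + k := Real.sq_sqrt (by linarith)
  have key : ∀ t ∈ Set.Ioo θ θs, 0 ≤ Real.sin t ∧ Real.sin t < Real.sin θs ∧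
      Real.cos θs ≤ Real.cos t := by
    intro t ht
    refine ⟨Real.sin_nonneg_of_nonneg_of_le_pi (by linarith [ht.1]) (by linarith [ht.2]),
      Real.sin_lt_sin_of_lt_of_le_pi_div_two (by linarith [ht.1]) h2.le ht.2,
      Real.cos_le_cos_of_nonneg_of_le_pi (by linarith [ht.1]) (by linarith) ht.2.le⟩
  have hcont : ∀ m : ℝ, Continuous (fun t => Real.arcsin (Real.sin t / m)) := fun m =>
    Real.continuous_arcsin.comp (Real.continuous_sin.div_const m)
  have hint0 : MeasureTheory.IntegrableOn
      (fun t => Real.cos t / Real.sqrt (Real.sin θs ^ 2 - Real.sin t ^ 2)) (Set.Ioc θ θs) := by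
    refine integrableOn_deriv_of_nonneg (hcont (Real.sin θs)).continuousOn
      (fun t ht => hasDerivAt_arcsin_sin_div _ t hs (key t ht).1 (key t ht).2.1) ?_
    intro t ht
    exact div_nonneg (hc.le.trans (key t ht).2.2) (Real.sqrt_nonneg _)
  have hint : MeasureTheory.IntegrableOn (fun θ' => 1 / Real.sqrt (Real.sin θs ^ 2 *
      (1 + k * Real.cos θ' ^ 2) - Real.sin θ' ^ 2)) (Set.Icc θ θs) := by
    rw [integrableOn_Icc_iff_integrableOn_Ioo]
    have hint1 := (hint0.mono_set Set.Ioo_subset_Ioc_self).const_mul (1 / Real.cos θs)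
    refine MeasureTheory.Integrable.mono' hint1 ?_ ?_
    · exact Measurable.aestronglyMeasurable (by fun_prop)
    · refine (MeasureTheory.ae_restrict_iff' measurableSet_Ioo).2 (Filter.Eventually.of_forall ?_)
      intro t ht
      obtain ⟨a, b, c⟩ := key t ht
      have hp : 0 < Real.sin θs ^ 2 - Real.sin t ^ 2 := by nlinarith
      have hq := Real.sqrt_pos.2 hp
      rw [Real.norm_of_nonneg (by positivity)]
      calc _ ≤ 1 / Real.sqrt (Real.sin θs ^ 2 - Real.sin t ^ 2) := by
            apply one_div_le_one_div_of_le hq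
            apply Real.sqrt_le_sqrt
            have : 0 ≤ Real.sin θs ^ 2 * (k * Real.cos t ^ 2) := by positivity
            linarith
        _ ≤ _ := by
            rw [div_mul_div_comm, one_mul, div_le_div_iff₀ hq (by positivity)]
            nlinarith
  have hm : 0 < Real.sqrt (1 + k) * Real.sin θs := by positivity
  have hle : Real.sin θs ≤ Real.sqrt (1 + k) * Real.sin θs := by nlinarith
  have main := sub_le_integral_of_hasDeriv_right_of_le h1.le
    (hcont (Real.sqrt (1 + k) * Real.sin θs)).continuousOn
    (fun t ht => (hasDerivAt_arcsin_sin_div _ t hm (key t ht).1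
      ((key t ht).2.1.trans_le hle)).hasDerivWithinAt) hint ?_
  · have e : Real.sin θs / (Real.sqrt (1 + k) * Real.sin θs) = 1 / Real.sqrt (1 + k) := by
      field_simp
    rw [e] at main
    exact main
  · intro t ht
    obtain ⟨a, b, c⟩ := key t ht
    have hct : 0 < Real.cos t := hc.trans_le c
    have hp : 0 < Real.sin θs ^ 2 - Real.sin t ^ 2 := by nlinarith
    have hkc : 0 ≤ Real.sin θs ^ 2 * (k * Real.cos t ^ 2) := by positivity
    have hks : 0 ≤ Real.sin θs ^ 2 * (k * Real.sin t ^ 2) := by positivity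
    have hkk : 0 ≤ Real.sin θs ^ 2 * k := by positivity
    have hsc := Real.sin_sq_add_cos_sq t
    have hA : 0 < Real.sin θs ^ 2 * (1 + k * Real.cos t ^ 2) - Real.sin t ^ 2 := by linarith
    have hB : 0 < (Real.sqrt (1 + k) * Real.sin θs) ^ 2 - Real.sin t ^ 2 := by
      rw [mul_pow, hr2]; linarith
    have hAB : Real.sin θs ^ 2 * (1 + k * Real.cos t ^ 2) - Real.sin t ^ 2 ≤
        (Real.sqrt (1 + k) * Real.sin θs) ^ 2 - Real.sin t ^ 2 := by
      rw [mul_pow, hr2]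
      have : Real.cos t ^ 2 = 1 - Real.sin t ^ 2 := by linarith
      rw [this]; linarith
    have := Real.sqrt_pos.2 hA
    exact div_le_div₀ zero_le_one (Real.cos_le_one t) this (Real.sqrt_le_sqrt hAB)
end
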